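/- Let n ≥ 2, m ≥ 2, and 𝐚 = (a₁,…,a_m) ∈ [1,∞)^m with a_j ≤ n for every j. Then there is a constant C such that for every i ∈ {1,…,m}, all nonnegative measurable f₁,…,f_m on ℝⁿ, and all x ∈ ℝⁿ: 𝔐_m^𝐚(f₁,…,f_m)(x) ≤ C · ℳ_s f_i(x) · ∏_{j≠i} M f_j(x). -/

import Mathlib

open MeasureTheory Metric Set
open scoped ENNReal NNReal

noncomputable section

abbrev Rn (n : ℕ) : Type := EuclideanSpace ℝ (Fin n)

/-- The degenerate surface `S_m^𝐚 = {(y¹,…,y^m) ∈ (ℝⁿ)^m : Σ_j |y^j|^{a_j} = 1}`. -/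
def Sm (n m : ℕ) (a : Fin m → ℝ) : Set (Fin m → Rn n) :=
  {y | ∑ j, ‖y j‖ ^ (a j) = 1}

/-- The normalized surface measure on `S_m^𝐚`, realized as the normalized
`(mn-1)`-dimensional Hausdorff measure restricted to the surface. -/
def μSm (n m : ℕ) (a : Fin m → ℝ) : Measure (Fin m → Rn n) :=
  (μH[((m : ℝ) * n - 1)] (Sm n m a))⁻¹ • (μH[((m : ℝ) * n - 1)]).restrict (Sm n m a)

/-- The `m`-linear average of nonnegative functions, as an `ℝ≥0∞`-valued integral. -/
def mAvgE (n m : ℕ) (a : Fin m → ℝ) (f : Fin m → Rn n → ℝ) (t : Fin m → ℝ) (x : Rn n) :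
    ℝ≥0∞ :=
  ∫⁻ y, ∏ j, ENNReal.ofReal (f j (x - t j • y j)) ∂(μSm n m a)

/-- The `m`-linear maximal function `𝔐_m^𝐚` (for nonnegative functions). -/
def mMaxE (n m : ℕ) (a : Fin m → ℝ) (f : Fin m → Rn n → ℝ) (x : Rn n) : ℝ≥0∞ :=
  ⨆ (t : Fin m → ℝ) (_ : ∀ j, 0 < t j), mAvgE n m a f t x

/-- Surface measure on the unit sphere `𝕊^{n-1} ⊆ ℝⁿ`: the `(n-1)`-dimensional
Hausdorff measure restricted to the sphere, normalized. -/
def μSph (n : ℕ) : Measure (Rn n) :=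
  (μH[((n : ℝ) - 1)] (sphere (0 : Rn n) 1))⁻¹ •
    (μH[((n : ℝ) - 1)]).restrict (sphere (0 : Rn n) 1)

/-- The spherical average `𝔄g(x,t)` for nonnegative `g`. -/
def sphAvgE (n : ℕ) (g : Rn n → ℝ) (x : Rn n) (t : ℝ) : ℝ≥0∞ :=
  ∫⁻ θ, ENNReal.ofReal (g (x - t • θ)) ∂(μSph n)

/-- The spherical maximal function `ℳ_s`. -/
def sphMax (n : ℕ) (f : Rn n → ℝ) (x : Rn n) : ℝ≥0∞ :=
  ⨆ t ∈ Ioi (0 : ℝ), sphAvgE n f x t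

/-- The Hardy–Littlewood maximal function on `ℝⁿ`. -/
def HLMax (n : ℕ) (f : Rn n → ℝ) (x : Rn n) : ℝ≥0∞ :=
  ⨆ r ∈ Ioi (0 : ℝ), (∫⁻ y in ball x r, ENNReal.ofReal |f y|) / volume (ball x r)

/-!
Thicken the surface `Φ = 1`, where `Φ(w) = ∑ j, ‖w j‖ ^ a j`, to the shell `1/2 < Φ < 1` and push
Lebesgue measure forward along the dilations `w ↦ (s ^ (1 / a j) • w j)_j`. The resulting cone
measure gives every ball of radius `r ≤ 1` centred on the surface mass at least a constant times
`r ^ (mn - 1)`, so a Vitali covering bounds the Hausdorff measure on the surface by a multiple of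
the cone measure.

An integral against the cone measure is a volume integral over the shell. In the variable `w i` use
polar coordinates and replace the radius `u` by the gauge `s = u ^ a i + b`, `b` being the
contribution of the other variables. As `1 ≤ a i ≤ n` and `u ≤ 1`, the polar density `u ^ (n - 1)`
is at most the Jacobian `a i * u ^ (a i - 1)`, and the angular integral is controlled by the
spherical maximal function. For fixed `s` the integrand is then a product over `j ≠ i`, and each
factor is an average over a ball.
-/

section HausdorffDensity

variable {X : Type*} [MetricSpace X]

lemma exists_countable_closedBall_cover [SecondCountableTopology X] {E U : Set X} (hU : IsOpen U)
    (hEU : E ⊆ U) {δ : ℝ} (hδ : 0 < δ) :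
    ∃ (u : Set X) (r : X → ℝ), u ⊆ E ∧ u.Countable ∧ (∀ x ∈ u, 0 < r x ∧ r x ≤ δ) ∧
      u.PairwiseDisjoint (fun x ↦ closedBall x (r x)) ∧ (∀ x ∈ u, closedBall x (r x) ⊆ U) ∧
      E ⊆ ⋃ x : u, closedBall (x : X) (5 * r x) := by
  have exists_radius (x : X) : ∃ r, x ∈ E → 0 < r ∧ r ≤ δ ∧ closedBall x r ⊆ U := by
    by_cases hx : x ∈ E
    · obtain ⟨ε, hε, hεU⟩ := nhds_basis_closedBall.mem_iff.1 (hU.mem_nhds (hEU hx))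
      exact ⟨min ε δ, fun _ ↦ ⟨lt_min hε hδ, min_le_right _ _,
        (closedBall_subset_closedBall (min_le_left _ _)).trans hεU⟩⟩
    · exact ⟨0, fun h ↦ absurd h hx⟩
  choose r hr using exists_radius
  obtain ⟨u, huE, hdisj, hcover⟩ :=
    Vitali.exists_disjoint_subfamily_covering_enlargement_closedBall E id r δ
      (fun x hx ↦ (hr x hx).2.1) 5 (by norm_num)
  refine ⟨u, r, huE, ?_, fun x hx ↦ ⟨(hr x (huE hx)).1, (hr x (huE hx)).2.1⟩, hdisj,
    fun x hx ↦ (hr x (huE hx)).2.2, fun x hx ↦ ?_⟩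
  · exact hdisj.countable_of_nonempty_interior fun x hx ↦
      ⟨x, ball_subset_interior_closedBall (mem_ball_self (hr x (huE hx)).1)⟩
  · obtain ⟨y, hy, hsub⟩ := hcover x hx
    exact mem_iUnion.2 ⟨⟨y, hy⟩, hsub (mem_closedBall_self (hr x hx).1.le)⟩

variable [MeasurableSpace X] [BorelSpace X] {ν : Measure X} {d : ℝ}

lemma exists_countable_cover_tsum_ediam_rpow_le [SecondCountableTopology X] (hd : 0 ≤ d) {c : ℝ≥0}
    (hc : c ≠ 0) {E U : Set X} (hU : IsOpen U) (hEU : E ⊆ U)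
    (hν : ∀ x ∈ E, ∀ r ∈ Ioc (0 : ℝ) 1, c * ENNReal.ofReal r ^ d ≤ ν (closedBall x r))
    {δ : ℝ} (hδ : 0 < δ) (hδ1 : δ ≤ 1) :
    ∃ (u : Set X) (t : u → Set X), u.Countable ∧ E ⊆ ⋃ x, t x ∧
      (∀ x, ediam (t x) ≤ ENNReal.ofReal (10 * δ)) ∧
      ∑' x, ediam (t x) ^ d ≤ 10 ^ d / c * ν U := by
  obtain ⟨u, r, huE, hu, hr, hdisj, hsub, hcover⟩ := exists_countable_closedBall_cover hU hEU hδ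
  have hdiam (x : u) : ediam (closedBall (x : X) (5 * r x)) ≤ 10 * ENNReal.ofReal (r x) := by
    rw [← closedEBall_ofReal (mul_nonneg (by norm_num) (hr x x.2).1.le)]
    refine ediam_closedEBall_le.trans_eq ?_
    rw [ENNReal.ofReal_mul (by norm_num), ENNReal.ofReal_ofNat, ← mul_assoc]
    norm_num
  refine ⟨u, fun x ↦ closedBall (x : X) (5 * r x), hu, hcover, fun x ↦ ?_, ?_⟩
  · refine (hdiam x).trans ?_
    rw [ENNReal.ofReal_mul (by norm_num), ENNReal.ofReal_ofNat]
    gcongr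
    exact (hr x x.2).2
  have := hu.to_subtype
  calc ∑' x : u, ediam (closedBall (x : X) (5 * r x)) ^ d
      ≤ ∑' x : u, 10 ^ d / c * ν (closedBall (x : X) (r x)) := by
        refine ENNReal.tsum_le_tsum fun x ↦ ?_
        have hx := hr x x.2
        calc ediam (closedBall (x : X) (5 * r x)) ^ d
            ≤ (10 * ENNReal.ofReal (r x)) ^ d := ENNReal.rpow_le_rpow (hdiam x) hd
          _ = 10 ^ d / c * (c * ENNReal.ofReal (r x) ^ d) := by
              rw [ENNReal.mul_rpow_of_nonneg _ _ hd, ← mul_assoc,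
                ENNReal.div_mul_cancel (by simpa using hc) ENNReal.coe_ne_top]
          _ ≤ 10 ^ d / c * ν (closedBall (x : X) (r x)) := by
              gcongr
              exact hν x (huE x.2) _ ⟨hx.1, hx.2.trans hδ1⟩
    _ = 10 ^ d / c * ν (⋃ x : u, closedBall (x : X) (r x)) := by
        rw [ENNReal.tsum_mul_left, measure_iUnion]
        · exact fun x y hxy ↦ hdisj x.2 y.2 (Subtype.coe_injective.ne hxy)
        · exact fun x ↦ isClosed_closedBall.measurableSet
    _ ≤ 10 ^ d / c * ν U := by
        gcongr
        exact iUnion_subset fun x ↦ hsub x x.2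

lemma hausdorffMeasure_le_of_le_measure_closedBall [SecondCountableTopology X] [ν.OuterRegular]
    (hd : 0 ≤ d) {c : ℝ≥0} (hc : c ≠ 0) {E : Set X}
    (hν : ∀ x ∈ E, ∀ r ∈ Ioc (0 : ℝ) 1, c * ENNReal.ofReal r ^ d ≤ ν (closedBall x r)) :
    μH[d] E ≤ 10 ^ d / c * ν E := by
  have le_of_isOpen (U : Set X) (hEU : E ⊆ U) (hU : IsOpen U) :
      μH[d] E ≤ 10 ^ d / c * ν U := by
    choose u t hu hcover hdiam hsum using fun k : ℕ ↦
      exists_countable_cover_tsum_ediam_rpow_le hd hc hU hEU hν (δ := 1 / ((k : ℝ) + 1))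
        (by positivity) (div_le_one_of_le₀ (by linarith [k.cast_nonneg (α := ℝ)]) (by positivity))
    have (k : ℕ) : Countable (u k) := (hu k).to_subtype
    have hmesh : Filter.Tendsto (fun k : ℕ ↦ ENNReal.ofReal (10 * (1 / ((k : ℝ) + 1))))
        Filter.atTop (nhds 0) := by
      simpa using ENNReal.tendsto_ofReal (tendsto_one_div_add_atTop_nhds_zero_nat.const_mul 10)
    calc μH[d] E ≤ Filter.atTop.liminf fun k ↦ ∑' x, ediam (t k x) ^ d :=
          Measure.hausdorffMeasure_le_liminf_tsum d E _ hmesh t (.of_forall hdiam)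
            (.of_forall hcover)
      _ ≤ Filter.atTop.liminf fun _ : ℕ ↦ 10 ^ d / c * ν U :=
          Filter.liminf_le_liminf (.of_forall hsum)
      _ = 10 ^ d / c * ν U := Filter.liminf_const _
  have hC0 : (10 : ℝ≥0∞) ^ d / c ≠ 0 := by simp
  have hCtop : (10 : ℝ≥0∞) ^ d / c ≠ ∞ :=
    ENNReal.div_ne_top (ENNReal.rpow_ne_top_of_nonneg hd (by norm_num)) (by simpa using hc)
  rw [mul_comm, ← ENNReal.div_le_iff hC0 hCtop, E.measure_eq_iInf_isOpen ν]
  exact le_iInf₂ fun U hEU ↦ le_iInf fun hU ↦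
    ENNReal.div_le_of_le_mul' (le_of_isOpen U hEU hU)

lemma le_smul_hausdorffMeasure_of_measure_le {C : ℝ≥0} (hC : C ≠ 0)
    (hν : ∀ s : Set X, ∀ δ ∈ Ioc (0 : ℝ) 1, ediam s ≤ ENNReal.ofReal δ →
      ν s ≤ C * ENNReal.ofReal δ ^ d) :
    ν ≤ (C : ℝ≥0∞) • μH[d] := by
  have hC0 : (C : ℝ≥0∞) ≠ 0 := by simpa using hC
  have hscaled : (C : ℝ≥0∞)⁻¹ • ν ≤ μH[d] := by
    refine Measure.le_hausdorffMeasure d _ 2⁻¹ (by simp) fun s hs ↦ ?_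
    have hlim : Filter.Tendsto (fun δ : ℝ≥0∞ ↦ δ ^ d) (nhdsWithin (ediam s) (Ioi (ediam s)))
        (nhds (ediam s ^ d)) :=
      (ENNReal.continuous_rpow_const.tendsto _).mono_left nhdsWithin_le_nhds
    have hs1 : ediam s < 1 := hs.trans_lt (by norm_num)
    have := nhdsGT_neBot_of_exists_gt ⟨1, hs1⟩
    refine ge_of_tendsto hlim ?_
    filter_upwards [Ioo_mem_nhdsGT hs1] with δ hδ
    have hδtop : δ ≠ ∞ := (hδ.2.trans ENNReal.one_lt_top).ne
    have := hν s δ.toReal ⟨ENNReal.toReal_pos (bot_le.trans_lt hδ.1).ne' hδtop,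
      ENNReal.toReal_le_of_le_ofReal one_pos.le (by simpa using hδ.2.le)⟩
      (by simpa [hδtop] using hδ.1.le)
    rw [ENNReal.ofReal_toReal hδtop] at this
    rwa [Measure.smul_apply, smul_eq_mul, ENNReal.inv_mul_le_iff hC0 ENNReal.coe_ne_top]
  intro s
  have := hscaled s
  rwa [Measure.smul_apply, smul_eq_mul, ENNReal.inv_mul_le_iff hC0 ENNReal.coe_ne_top] at this

end HausdorffDensity

section Tubes

variable {W : Type*} [NormedAddCommGroup W] [NormedSpace ℝ W] [FiniteDimensional ℝ W]
  [MeasurableSpace W] [BorelSpace W] (μ : Measure W) [μ.IsAddHaarMeasure]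
  {γ : ℝ → W} {α β ρ : ℝ}

lemma sum_range_addHaar_closedBall (x : ℕ → W) {R : ℝ} (hR : 0 ≤ R) (N : ℕ) :
    ∑ k ∈ Finset.range N, μ (closedBall (x k) R) =
      ENNReal.ofReal (N * R ^ Module.finrank ℝ W) * μ (ball 0 1) := by
  simp_rw [μ.addHaar_closedBall _ hR]
  rw [Finset.sum_const, Finset.card_range, nsmul_eq_mul, ENNReal.ofReal_mul (by positivity),
    ENNReal.ofReal_natCast, mul_assoc]

lemma le_measure_iUnion_closedBall_of_expanding {c : ℝ} (hc : 0 < c) (hαβ : α ≤ β) (hρ : 0 < ρ)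
    (hγ : ∀ s ∈ Icc α β, ∀ t ∈ Icc α β, c * |s - t| ≤ dist (γ s) (γ t)) :
    ENNReal.ofReal ((β - α) * c / (3 * ρ) * ρ ^ Module.finrank ℝ W) * μ (ball 0 1) ≤
      μ (⋃ s ∈ Icc α β, closedBall (γ s) ρ) := by
  set h := 3 * ρ / c
  have hh : 0 < h := by positivity
  have hch : c * h = 3 * ρ := mul_div_cancel₀ _ hc.ne'
  set N := ⌊(β - α) / h⌋₊ + 1
  have node_mem : ∀ k ∈ Finset.range N, α + k * h ∈ Icc α β := by
    intro k hk
    have hkN : (k : ℝ) ≤ (β - α) / h :=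
      (Nat.le_floor_iff (div_nonneg (sub_nonneg.2 hαβ) hh.le)).1
        (Nat.lt_succ_iff.1 (Finset.mem_range.1 hk))
    rw [le_div_iff₀ hh] at hkN
    exact ⟨le_add_of_nonneg_right (by positivity), by linarith⟩
  have hdisj : (Finset.range N : Set ℕ).PairwiseDisjoint
      fun k : ℕ ↦ closedBall (γ (α + k * h)) ρ := by
    intro k hk l hl hkl
    apply closedBall_disjoint_closedBall
    have one_le : (1 : ℝ) ≤ |(k : ℝ) - l| := by
      exact_mod_cast Int.one_le_abs (sub_ne_zero.2 (Nat.cast_injective.ne hkl))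
    calc ρ + ρ < 1 * (c * h) := by linarith
      _ ≤ |(k : ℝ) - l| * (c * h) := by gcongr
      _ = c * |α + k * h - (α + l * h)| := by
          rw [add_sub_add_left_eq_sub, ← sub_mul, abs_mul, abs_of_pos hh]
          ring
      _ ≤ dist (γ (α + k * h)) (γ (α + l * h)) := hγ _ (node_mem k hk) _ (node_mem l hl)
  calc ENNReal.ofReal ((β - α) * c / (3 * ρ) * ρ ^ Module.finrank ℝ W) * μ (ball 0 1)
      ≤ ENNReal.ofReal (N * ρ ^ Module.finrank ℝ W) * μ (ball 0 1) := by
        gcongr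
        rw [← div_div_eq_mul_div]
        exact_mod_cast (Nat.lt_floor_add_one _).le
    _ = μ (⋃ k ∈ Finset.range N, closedBall (γ (α + k * h)) ρ) := by
        rw [measure_biUnion_finset hdisj fun _ _ ↦ isClosed_closedBall.measurableSet,
          sum_range_addHaar_closedBall μ (fun k ↦ γ (α + k * h)) hρ.le]
    _ ≤ μ (⋃ s ∈ Icc α β, closedBall (γ s) ρ) :=
        measure_mono <| iUnion₂_subset fun k hk ↦
          subset_biUnion_of_mem (u := fun s ↦ closedBall (γ s) ρ) (node_mem k hk)

lemma measure_iUnion_closedBall_le_of_lipschitz {L : ℝ} (hL : 0 ≤ L) (hαβ : α ≤ β)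
    (hρ : 0 < ρ) (hρ1 : ρ ≤ 1)
    (hγ : ∀ s ∈ Icc α β, ∀ t ∈ Icc α β, dist (γ s) (γ t) ≤ L * |s - t|) :
    μ (⋃ s ∈ Icc α β, closedBall (γ s) ρ) ≤
      ENNReal.ofReal ((β - α + 1) / ρ * ((1 + L) * ρ) ^ Module.finrank ℝ W) * μ (ball 0 1) := by
  set N := ⌊(β - α) / ρ⌋₊ + 1
  have hcover : ⋃ s ∈ Icc α β, closedBall (γ s) ρ ⊆
      ⋃ k ∈ Finset.range N, closedBall (γ (α + k * ρ)) ((1 + L) * ρ) := by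
    refine iUnion₂_subset fun s hs ↦ ?_
    set k := ⌊(s - α) / ρ⌋₊
    have hkN : k ∈ Finset.range N :=
      Finset.mem_range_succ_iff.2 (Nat.floor_le_floor (by gcongr; exact hs.2))
    have hk_le : k * ρ ≤ s - α :=
      (le_div_iff₀ hρ).1 (Nat.floor_le (div_nonneg (sub_nonneg.2 hs.1) hρ.le))
    have lt_hk : s - α < (k + 1) * ρ := (div_lt_iff₀ hρ).1 (Nat.lt_floor_add_one _)
    have hkρ : 0 ≤ k * ρ := by positivity
    refine subset_iUnion₂_of_subset k hkN (closedBall_subset_closedBall' ?_)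
    calc ρ + dist (γ s) (γ (α + k * ρ)) ≤ ρ + L * |s - (α + k * ρ)| := by
          gcongr
          exact hγ s hs _ ⟨by linarith, by linarith [hs.2]⟩
      _ ≤ ρ + L * ρ := by
          gcongr
          exact abs_le.2 ⟨by linarith, by linarith⟩
      _ = (1 + L) * ρ := by ring
  calc μ (⋃ s ∈ Icc α β, closedBall (γ s) ρ)
      ≤ ∑ k ∈ Finset.range N, μ (closedBall (γ (α + k * ρ)) ((1 + L) * ρ)) :=
        (measure_mono hcover).trans (measure_biUnion_finset_le _ _)
    _ = ENNReal.ofReal (N * ((1 + L) * ρ) ^ Module.finrank ℝ W) * μ (ball 0 1) :=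
        sum_range_addHaar_closedBall μ (fun k ↦ γ (α + k * ρ)) (by positivity) N
    _ ≤ _ := by
        gcongr
        rw [add_div]
        push_cast [N]
        gcongr
        · exact Nat.floor_le (div_nonneg (sub_nonneg.2 hαβ) hρ.le)
        · exact (one_le_div hρ).2 hρ1

end Tubes

section RpowLipschitz

lemma abs_rpow_sub_rpow_le_of_one_le {p R u v : ℝ} (hp : 1 ≤ p) (hu : u ∈ Icc 0 R)
    (hv : v ∈ Icc 0 R) : |u ^ p - v ^ p| ≤ p * R ^ (p - 1) * |u - v| := by
  refine (convex_Icc 0 R).norm_image_sub_le_of_norm_hasDerivWithin_le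
    (f := fun x : ℝ ↦ x ^ p) (f' := fun x ↦ p * x ^ (p - 1))
    (fun x _ ↦ (Real.hasDerivAt_rpow_const (.inr hp)).hasDerivWithinAt) (fun x hx ↦ ?_) hv hu
  have := Real.rpow_nonneg hx.1 (p - 1)
  rw [Real.norm_of_nonneg (by positivity)]
  gcongr
  exacts [hx.1, hx.2]

lemma abs_rpow_sub_rpow_le_of_le_one {q r u v : ℝ} (hq : q ≤ 1) (hr : 0 < r) (hu : r ≤ u)
    (hv : r ≤ v) : |u ^ q - v ^ q| ≤ |q| * r ^ (q - 1) * |u - v| := by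
  refine (convex_Ici r).norm_image_sub_le_of_norm_hasDerivWithin_le
    (f := fun x : ℝ ↦ x ^ q) (f' := fun x ↦ q * x ^ (q - 1))
    (fun x hx ↦ (Real.hasDerivAt_rpow_const (.inl (hr.trans_le hx).ne')).hasDerivWithinAt)
    (fun x hx ↦ ?_) hv hu
  rw [norm_mul, Real.norm_eq_abs, Real.norm_of_nonneg (Real.rpow_nonneg (hr.le.trans hx) _)]
  gcongr ?_ * ?_
  exact Real.rpow_le_rpow_of_nonpos hr hx (by linarith)

lemma inv_rpow_le_two {p u : ℝ} (hp : p ∈ Icc 0 1) (hu : 1 / 2 ≤ u) : u⁻¹ ^ p ≤ 2 := by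
  have : 0 < u := by linarith
  calc u⁻¹ ^ p ≤ 2 ^ p := by
        gcongr
        · exact hp.1
        · exact inv_le_of_inv_le₀ two_pos (by linarith)
    _ ≤ 2 := Real.rpow_le_self_of_one_le one_le_two hp.2

lemma abs_inv_rpow_sub_inv_rpow_le {p u v : ℝ} (hp : p ∈ Icc 0 1) (hu : 1 / 2 ≤ u)
    (hv : 1 / 2 ≤ v) : |u⁻¹ ^ p - v⁻¹ ^ p| ≤ 4 * |u - v| := by
  have hconst : |(-p)| * (1 / 2 : ℝ) ^ (-p - 1) ≤ 4 := by
    calc |(-p)| * (1 / 2 : ℝ) ^ (-p - 1) ≤ 1 * (1 / 2 : ℝ) ^ (-2 : ℝ) := by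
          gcongr ?_ * ?_
          · rw [abs_neg, abs_of_nonneg hp.1]
            exact hp.2
          · exact Real.rpow_le_rpow_of_exponent_ge (by norm_num) (by norm_num) (by linarith [hp.2])
      _ = 4 := by norm_num [Real.rpow_neg]
  rw [Real.inv_rpow (by linarith), Real.inv_rpow (by linarith), ← Real.rpow_neg (by linarith),
    ← Real.rpow_neg (by linarith)]
  exact (abs_rpow_sub_rpow_le_of_le_one (by linarith [hp.1]) (by norm_num) hu hv).trans
    (by gcongr)

end RpowLipschitz

section AnisotropicCone

variable {ι E : Type*} [NormedAddCommGroup E] {a : ι → ℝ}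

/-- The anisotropic dilations `w ↦ (s ^ (1 / a j) • w j)_j`, for which the gauge
`anisoGauge` is homogeneous of degree one. -/
def anisoDilation [NormedSpace ℝ E] (a : ι → ℝ) (s : ℝ) (w : ι → E) : ι → E :=
  fun j ↦ s ^ (1 / a j) • w j

lemma anisoDilation_inv_anisoDilation [NormedSpace ℝ E] {s : ℝ} (hs : 0 < s) (w : ι → E) :
    anisoDilation a s⁻¹ (anisoDilation a s w) = w := by
  funext j
  rw [anisoDilation, anisoDilation, smul_smul, ← Real.mul_rpow (inv_nonneg.2 hs.le) hs.le,
    inv_mul_cancel₀ hs.ne', Real.one_rpow, one_smul]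

variable [Fintype ι]

/-- The anisotropic gauge `Φ(w) = ∑ j, ‖w j‖ ^ a j`, whose unit level set is the surface
`S_m^𝐚`. -/
def anisoGauge (a : ι → ℝ) (w : ι → E) : ℝ := ∑ j, ‖w j‖ ^ a j

/-- The shell `1/2 < Φ < 1` over which surface integrals are thickened to volume integrals. -/
def anisoShell (E : Type*) [NormedAddCommGroup E] (a : ι → ℝ) : Set (ι → E) :=
  anisoGauge a ⁻¹' Ioo (1 / 2) 1

lemma continuous_anisoGauge (ha : ∀ j, 0 ≤ a j) : Continuous (anisoGauge (E := E) a) :=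
  continuous_finsetSum _ fun j _ ↦ (continuous_apply j).norm.rpow_const fun _ ↦ .inr (ha j)

lemma measurable_anisoGauge [MeasurableSpace E] [OpensMeasurableSpace E] :
    Measurable (anisoGauge (E := E) a) := by
  unfold anisoGauge
  fun_prop

lemma measurableSet_anisoShell [MeasurableSpace E] [OpensMeasurableSpace E] :
    MeasurableSet (anisoShell E a) :=
  measurable_anisoGauge measurableSet_Ioo

lemma anisoGauge_update [DecidableEq ι] (a : ι → ℝ) (w : ι → E) (i : ι) (v : E) :
    anisoGauge a (Function.update w i v) = ‖v‖ ^ a i + ∑ j ∈ Finset.univ.erase i, ‖w j‖ ^ a j := by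
  rw [anisoGauge, ← Finset.add_sum_erase _ _ (Finset.mem_univ i), Function.update_self]
  congr 1
  exact Finset.sum_congr rfl fun j hj ↦ by rw [Function.update_of_ne (Finset.ne_of_mem_erase hj)]

lemma norm_rpow_le_anisoGauge (w : ι → E) (j : ι) : ‖w j‖ ^ a j ≤ anisoGauge a w :=
  Finset.single_le_sum (f := fun j ↦ ‖w j‖ ^ a j)
    (fun _ _ ↦ Real.rpow_nonneg (norm_nonneg _) _) (Finset.mem_univ j)

lemma norm_lt_one_of_anisoGauge_lt_one (ha : ∀ j, 0 < a j) {w : ι → E} (hw : anisoGauge a w < 1)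
    (j : ι) : ‖w j‖ < 1 := by
  by_contra! hj
  exact ((norm_rpow_le_anisoGauge w j).trans_lt hw).not_ge (Real.one_le_rpow hj (ha j).le)

lemma norm_le_one_of_anisoGauge_le_one (ha : ∀ j, 0 < a j) {w : ι → E} (hw : anisoGauge a w ≤ 1) :
    ‖w‖ ≤ 1 := by
  refine (pi_norm_le_iff_of_nonneg zero_le_one).2 fun j ↦ ?_
  by_contra! hj
  exact ((norm_rpow_le_anisoGauge w j).trans hw).not_gt (Real.one_lt_rpow hj (ha j))

lemma exists_lipschitzOnWith_anisoGauge (ha : ∀ j, 1 ≤ a j) {R : ℝ} (hR : 0 ≤ R) :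
    ∃ K : ℝ≥0, 0 < K ∧ LipschitzOnWith K (anisoGauge (E := E) a) (closedBall 0 R) := by
  have term_nonneg (j : ι) : 0 ≤ a j * R ^ (a j - 1) :=
    mul_nonneg (zero_le_one.trans (ha j)) (Real.rpow_nonneg hR _)
  refine ⟨⟨∑ j, a j * R ^ (a j - 1), Finset.sum_nonneg fun j _ ↦ term_nonneg j⟩ + 1,
    by positivity,
    .weaken (.of_dist_le_mul fun v hv w hw ↦ ?_) (le_add_of_nonneg_right zero_le_one)⟩
  have norm_mem {z : ι → E} (hz : z ∈ closedBall 0 R) (j : ι) : ‖z j‖ ∈ Icc 0 R :=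
    ⟨norm_nonneg _, (norm_le_pi_norm z j).trans (mem_closedBall_zero_iff.1 hz)⟩
  calc dist (anisoGauge a v) (anisoGauge a w)
      ≤ ∑ j, |‖v j‖ ^ a j - ‖w j‖ ^ a j| := dist_sum_sum_le _ _ _
    _ ≤ ∑ j, a j * R ^ (a j - 1) * dist v w := Finset.sum_le_sum fun j _ ↦ by
        refine (abs_rpow_sub_rpow_le_of_one_le (ha j) (norm_mem hv j) (norm_mem hw j)).trans ?_
        gcongr ?_ * ?_
        · exact term_nonneg j
        · exact (abs_norm_sub_norm_le _ _).trans
            ((dist_eq_norm (v j) (w j)).ge.trans (dist_le_pi_dist v w j))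
    _ = (∑ j, a j * R ^ (a j - 1)) * dist v w := (Finset.sum_mul ..).symm

variable [NormedSpace ℝ E]

/-- The projection onto the surface `Φ = 1` along the orbits of the anisotropic dilations. -/
def anisoProj (a : ι → ℝ) (w : ι → E) : ι → E := anisoDilation a (anisoGauge a w)⁻¹ w

lemma anisoGauge_anisoDilation (ha : ∀ j, a j ≠ 0) {s : ℝ} (hs : 0 ≤ s) (w : ι → E) :
    anisoGauge a (anisoDilation a s w) = s * anisoGauge a w := by
  unfold anisoGauge anisoDilation
  rw [Finset.mul_sum]
  refine Finset.sum_congr rfl fun j _ ↦ ?_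
  have hsj := Real.rpow_nonneg hs (1 / a j)
  rw [norm_smul, Real.norm_of_nonneg hsj, Real.mul_rpow hsj (norm_nonneg _), ← Real.rpow_mul hs,
    one_div_mul_cancel (ha j), Real.rpow_one]

-- Along the dilation curve the gauge is the parameter itself, so a Lipschitz bound for the gauge
-- is an expansion bound for the curve.
lemma inv_mul_abs_sub_le_dist_anisoDilation (ha : ∀ j, 0 < a j) {K : ℝ≥0} (hK : 0 < K)
    (hΦ : LipschitzOnWith K (anisoGauge (E := E) a) (closedBall 0 2)) {y : ι → E}
    (hy : anisoGauge a y = 1) {s t : ℝ} (hs : s ∈ Icc 0 1) (ht : t ∈ Icc 0 1) :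
    (K : ℝ)⁻¹ * |s - t| ≤ dist (anisoDilation a s y) (anisoDilation a t y) := by
  have gauge {u : ℝ} (hu : u ∈ Icc 0 1) : anisoGauge a (anisoDilation a u y) = u := by
    rw [anisoGauge_anisoDilation (fun j ↦ (ha j).ne') hu.1, hy, mul_one]
  have mem {u : ℝ} (hu : u ∈ Icc 0 1) : anisoDilation a u y ∈ closedBall 0 2 :=
    mem_closedBall_zero_iff.2 <| (norm_le_one_of_anisoGauge_le_one ha
      ((gauge hu).trans_le hu.2)).trans one_le_two
  rw [inv_mul_le_iff₀ (by exact_mod_cast hK)]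
  simpa only [gauge hs, gauge ht, Real.dist_eq] using hΦ.dist_le_mul _ (mem hs) _ (mem ht)

lemma dist_anisoDilation_inv_le (ha : ∀ j, 1 ≤ a j) {s t : ℝ} (hs : 1 / 2 ≤ s) (ht : 1 / 2 ≤ t)
    {v w : ι → E} (hv : ‖v‖ ≤ 1) :
    dist (anisoDilation a t⁻¹ w) (anisoDilation a s⁻¹ v) ≤ 2 * dist w v + 4 * |t - s| := by
  refine (dist_pi_le_iff (by positivity)).2 fun j ↦ ?_
  have hp : 1 / a j ∈ Icc 0 1 :=
    ⟨one_div_nonneg.2 (zero_le_one.trans (ha j)),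
      div_le_one_of_le₀ (ha j) (zero_le_one.trans (ha j))⟩
  have htj : 0 ≤ t⁻¹ ^ (1 / a j) := Real.rpow_nonneg (inv_nonneg.2 (by linarith)) _
  calc dist (t⁻¹ ^ (1 / a j) • w j) (s⁻¹ ^ (1 / a j) • v j)
      ≤ dist (t⁻¹ ^ (1 / a j) • w j) (t⁻¹ ^ (1 / a j) • v j) +
          dist (t⁻¹ ^ (1 / a j) • v j) (s⁻¹ ^ (1 / a j) • v j) := dist_triangle ..
    _ = t⁻¹ ^ (1 / a j) * dist (w j) (v j) +
          |t⁻¹ ^ (1 / a j) - s⁻¹ ^ (1 / a j)| * ‖v j‖ := by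
        rw [dist_smul₀, Real.norm_of_nonneg htj, dist_eq_norm (_ • v j), ← sub_smul, norm_smul,
          Real.norm_eq_abs]
    _ ≤ 2 * dist w v + 4 * |t - s| * 1 := by
        gcongr
        · exact inv_rpow_le_two hp ht
        · exact dist_le_pi_dist w v j
        · exact abs_inv_rpow_sub_inv_rpow_le hp ht hs
        · exact (norm_le_pi_norm v j).trans hv
    _ = 2 * dist w v + 4 * |t - s| := by rw [mul_one]

lemma closedBall_anisoDilation_subset (ha : ∀ j, 1 ≤ a j) {K : ℝ≥0}
    (hΦ : LipschitzOnWith K (anisoGauge (E := E) a) (closedBall 0 2)) {y : ι → E}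
    (hy : anisoGauge a y = 1) {s r : ℝ} (hs : s ∈ Icc (5 / 8) (7 / 8)) (hr : r ∈ Icc 0 1) :
    closedBall (anisoDilation a s y) (r / (2 + 8 * K)) ⊆
      anisoProj a ⁻¹' closedBall y r ∩ anisoShell E a := by
  intro w hw
  set v := anisoDilation a s y
  have hs0 : 0 < s := by linarith [hs.1]
  have ha0 (j : ι) : 0 < a j := zero_lt_one.trans_le (ha j)
  have hv : anisoGauge a v = s := by
    rw [anisoGauge_anisoDilation (fun j ↦ (ha0 j).ne') hs0.le, hy, mul_one]
  have hv1 : ‖v‖ ≤ 1 := norm_le_one_of_anisoGauge_le_one ha0 (by linarith [hs.2])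
  have hwv : dist w v * (2 + 8 * K) ≤ r := (le_div_iff₀ (by positivity)).1 (mem_closedBall.1 hw)
  have hKwv : 0 ≤ K * dist w v := by positivity
  have hw2 : w ∈ closedBall 0 2 := by
    rw [mem_closedBall_zero_iff]
    have := norm_le_norm_add_norm_sub' w v
    rw [← dist_eq_norm] at this
    linarith [hr.2]
  have hgauge : |anisoGauge a w - s| ≤ K * dist w v := by
    simpa only [hv, Real.dist_eq] using
      hΦ.dist_le_mul _ hw2 _ (mem_closedBall_zero_iff.2 (hv1.trans one_le_two))
  have hgauge_lt : |anisoGauge a w - s| < 1 / 8 := by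
    rcases (dist_nonneg (x := w) (y := v)).eq_or_lt with h0 | h0
    · rw [← h0, mul_zero] at hgauge
      linarith
    · linarith [hr.2]
  have hshell : anisoGauge a w ∈ Ioo (1 / 2) 1 := by
    rw [abs_lt] at hgauge_lt
    exact ⟨by linarith [hs.1], by linarith [hs.2]⟩
  refine ⟨mem_closedBall.2 ?_, hshell⟩
  calc dist (anisoProj a w) y
      = dist (anisoDilation a (anisoGauge a w)⁻¹ w) (anisoDilation a s⁻¹ v) := by
        rw [anisoDilation_inv_anisoDilation hs0, anisoProj]
    _ ≤ 2 * dist w v + 4 * |anisoGauge a w - s| :=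
        dist_anisoDilation_inv_le ha (by linarith [hs.1]) hshell.1.le hv1
    _ ≤ r := by linarith

variable [MeasurableSpace E]

/-- The cone measure on the surface `Φ = 1`: the mass of a set is the `ν`-volume of the part of the
shell that projects onto it. -/
def coneMeasure (a : ι → ℝ) (ν : Measure (ι → E)) : Measure (ι → E) :=
  (ν.restrict (anisoShell E a)).map (anisoProj a)

variable [FiniteDimensional ℝ E]

lemma isFiniteMeasure_coneMeasure (ν : Measure (ι → E)) [IsFiniteMeasureOnCompacts ν]
    (ha : ∀ j, 0 < a j) : IsFiniteMeasure (coneMeasure a ν) := by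
  have hsub : anisoShell E a ⊆ closedBall 0 1 := fun w hw ↦
    mem_closedBall_zero_iff.2 (norm_le_one_of_anisoGauge_le_one ha hw.2.le)
  have : IsFiniteMeasure (ν.restrict (anisoShell E a)) :=
    isFiniteMeasure_restrict.2 ((measure_mono hsub).trans_lt measure_closedBall_lt_top).ne
  exact Measure.isFiniteMeasure_map _ _

variable [BorelSpace E]

lemma measurable_anisoProj : Measurable (anisoProj (E := E) a) := by
  have := measurable_anisoGauge (E := E) (a := a)
  unfold anisoProj anisoDilation
  fun_prop

variable (ν : Measure (ι → E)) [ν.IsAddHaarMeasure]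

lemma exists_le_coneMeasure_closedBall (ha : ∀ j, 1 ≤ a j) :
    ∃ c : ℝ≥0, c ≠ 0 ∧ ∀ y ∈ anisoGauge a ⁻¹' {1}, ∀ r ∈ Ioc (0 : ℝ) 1,
      c * ENNReal.ofReal r ^ ((Module.finrank ℝ (ι → E) : ℝ) - 1) ≤
        coneMeasure a ν (closedBall y r) := by
  obtain ⟨K, hK, hΦ⟩ := exists_lipschitzOnWith_anisoGauge (E := E) ha zero_le_two
  have ha0 (j : ι) : 0 < a j := zero_lt_one.trans_le (ha j)
  set D := Module.finrank ℝ (ι → E)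
  set q : ℝ := (2 + 8 * K)⁻¹
  have hq : 0 < q := by positivity
  set b : ℝ := 1 / 4 * (K : ℝ)⁻¹ / (3 * q) * q ^ D
  have hball0 : ν (ball 0 1) ≠ 0 := (measure_ball_pos ν 0 one_pos).ne'
  have hball : ν (ball 0 1) ≠ ∞ := measure_ball_lt_top.ne
  refine ⟨b.toNNReal * (ν (ball 0 1)).toNNReal, ?_, fun y hy r hr ↦ ?_⟩
  · exact mul_ne_zero (Real.toNNReal_pos.2 (by positivity)).ne'
      (ENNReal.toNNReal_ne_zero.2 ⟨hball0, hball⟩)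
  calc ((b.toNNReal * (ν (ball 0 1)).toNNReal : ℝ≥0) : ℝ≥0∞) * ENNReal.ofReal r ^ ((D : ℝ) - 1)
      = ENNReal.ofReal ((7 / 8 - 5 / 8) * (K : ℝ)⁻¹ / (3 * (q * r)) * (q * r) ^ D) *
          ν (ball 0 1) := by
        rw [ENNReal.coe_mul, ENNReal.coe_toNNReal hball, mul_right_comm,
          ENNReal.ofReal_rpow_of_pos hr.1, ← ENNReal.ofReal, ← ENNReal.ofReal_mul (by positivity),
          Real.rpow_sub_one hr.1.ne', Real.rpow_natCast]
        congr 2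
        have := hr.1
        rw [mul_pow]
        simp only [b]
        field_simp
        norm_num
    _ ≤ ν (⋃ s ∈ Icc (5 / 8 : ℝ) (7 / 8), closedBall (anisoDilation a s y) (q * r)) :=
        le_measure_iUnion_closedBall_of_expanding ν (by positivity) (by norm_num)
          (mul_pos hq hr.1) fun s hs t ht ↦ inv_mul_abs_sub_le_dist_anisoDilation ha0 hK hΦ hy
            ⟨by linarith [hs.1], by linarith [hs.2]⟩ ⟨by linarith [ht.1], by linarith [ht.2]⟩
    _ ≤ ν (anisoProj a ⁻¹' closedBall y r ∩ anisoShell E a) :=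
        measure_mono <| iUnion₂_subset fun s hs ↦ by
          rw [inv_mul_eq_div]
          exact closedBall_anisoDilation_subset ha hΦ hy hs ⟨hr.1.le, hr.2⟩
    _ = coneMeasure a ν (closedBall y r) := by
        rw [coneMeasure, Measure.map_apply measurable_anisoProj measurableSet_closedBall,
          Measure.restrict_apply (measurable_anisoProj measurableSet_closedBall)]

variable [Nontrivial (ι → E)]

lemma exists_hausdorffMeasure_restrict_le_smul_coneMeasure (ha : ∀ j, 1 ≤ a j) :
    ∃ C : ℝ≥0, μH[(Module.finrank ℝ (ι → E) : ℝ) - 1].restrict (anisoGauge a ⁻¹' {1}) ≤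
      (C : ℝ≥0∞) • coneMeasure a ν := by
  obtain ⟨c, hc, hdensity⟩ := exists_le_coneMeasure_closedBall ν ha
  have := isFiniteMeasure_coneMeasure ν fun j ↦ zero_lt_one.trans_le (ha j)
  have hd : (0 : ℝ) ≤ Module.finrank ℝ (ι → E) - 1 :=
    sub_nonneg.2 (by exact_mod_cast Module.finrank_pos (R := ℝ) (M := ι → E))
  have hC : (10 : ℝ≥0∞) ^ ((Module.finrank ℝ (ι → E) : ℝ) - 1) / c ≠ ∞ :=
    ENNReal.div_ne_top (ENNReal.rpow_ne_top_of_nonneg hd (by norm_num)) (by simpa using hc)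
  refine ⟨(10 ^ ((Module.finrank ℝ (ι → E) : ℝ) - 1) / (c : ℝ≥0∞)).toNNReal,
    Measure.le_iff.2 fun s hs ↦ ?_⟩
  rw [ENNReal.coe_toNNReal hC, Measure.restrict_apply hs, Measure.smul_apply, smul_eq_mul]
  exact (hausdorffMeasure_le_of_le_measure_closedBall hd hc fun y hy ↦ hdensity y hy.2).trans
    (by gcongr; exact inter_subset_left)

lemma hausdorffMeasure_anisoGauge_preimage_one_lt_top (ha : ∀ j, 1 ≤ a j) :
    μH[(Module.finrank ℝ (ι → E) : ℝ) - 1] (anisoGauge (E := E) a ⁻¹' {1}) < ∞ := by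
  obtain ⟨C, hC⟩ :=
    exists_hausdorffMeasure_restrict_le_smul_coneMeasure (Measure.addHaar (G := ι → E)) ha
  have := isFiniteMeasure_coneMeasure (E := E) Measure.addHaar fun j ↦ zero_lt_one.trans_le (ha j)
  calc μH[(Module.finrank ℝ (ι → E) : ℝ) - 1] (anisoGauge a ⁻¹' {1})
      ≤ C * coneMeasure a Measure.addHaar univ := by simpa using hC univ
    _ < ∞ := ENNReal.mul_lt_top ENNReal.coe_lt_top (measure_lt_top _ _)

end AnisotropicCone

section FrontierMeasure

variable {W : Type*} [NormedAddCommGroup W] [NormedSpace ℝ W] {U : Set W}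

lemma exists_add_smul_mem_frontier (hU : Bornology.IsBounded U) {e : W} (he : e ≠ 0) {u : W}
    (hu : u ∈ U) : ∃ t : ℝ, u + t • e ∈ frontier U := by
  have exits : ∃ t : ℝ, u + t • e ∉ U := by
    obtain ⟨R, hR⟩ := hU.subset_ball 0
    refine ⟨(R + ‖u‖) / ‖e‖, fun ht ↦ ?_⟩
    have hlt : ‖u + ((R + ‖u‖) / ‖e‖) • e‖ < R := mem_ball_zero_iff.1 (hR ht)
    have hR0 : 0 < R := (norm_nonneg _).trans_lt hlt
    have hnorm : ‖((R + ‖u‖) / ‖e‖) • e‖ = R + ‖u‖ := by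
      rw [norm_smul, Real.norm_of_nonneg (by positivity), div_mul_cancel₀ _ (norm_ne_zero_iff.2 he)]
    have := norm_sub_le (u + ((R + ‖u‖) / ‖e‖) • e) u
    rw [add_sub_cancel_left, hnorm] at this
    linarith
  have hline : Continuous fun t : ℝ ↦ u + t • e := by fun_prop
  obtain ⟨t, ht⟩ : (frontier ((fun t : ℝ ↦ u + t • e) ⁻¹' U)).Nonempty :=
    nonempty_frontier_iff.2 ⟨⟨0, by simpa using hu⟩, (ne_univ_iff_exists_notMem _).2 exits⟩
  exact ⟨t, hline.frontier_preimage_subset U ht⟩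

variable [FiniteDimensional ℝ W] [Nontrivial W] [MeasurableSpace W] [BorelSpace W]

-- Every line in a fixed direction that meets `U` meets its frontier, so in the quotient by that
-- direction the image of the frontier contains the open image of `U`.
lemma hausdorffMeasure_frontier_pos (hUo : IsOpen U) (hUne : U.Nonempty)
    (hUb : Bornology.IsBounded U) : 0 < μH[(Module.finrank ℝ W : ℝ) - 1] (frontier U) := by
  obtain ⟨e, he⟩ := exists_ne (0 : W)
  set S := Submodule.span ℝ {e}
  have : IsClosed (S : Set W) := S.closed_of_finiteDimensional
  let _ : MeasurableSpace (W ⧸ S) := borel _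
  have : BorelSpace (W ⧸ S) := ⟨rfl⟩
  have hrank : (Module.finrank ℝ W : ℝ) - 1 = Module.finrank ℝ (W ⧸ S) := by
    rw [← S.finrank_quotient_add_finrank, finrank_span_singleton he]
    push_cast
    ring
  have hsub : S.mkQL '' U ⊆ S.mkQL '' frontier U := by
    rintro _ ⟨u, hu, rfl⟩
    obtain ⟨t, ht⟩ := exists_add_smul_mem_frontier hUb he hu
    exact ⟨_, ht, (Submodule.Quotient.eq S).2 <| by
      simpa using S.smul_mem t (Submodule.mem_span_singleton_self e)⟩
  have hpos : 0 < μH[Module.finrank ℝ (W ⧸ S)] (S.mkQL '' U) :=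
    (S.isOpenMap_mkQ U hUo).measure_pos _ (hUne.image _)
  have hle := (hpos.trans_le (measure_mono hsub)).trans_le
    (S.mkQL.lipschitz.hausdorffMeasure_image_le (Nat.cast_nonneg _) _)
  rw [hrank]
  exact pos_of_mul_pos_right hle bot_le

lemma hausdorffMeasure_anisoGauge_preimage_one_pos {ι E : Type*} [Fintype ι]
    [NormedAddCommGroup E] [NormedSpace ℝ E] [FiniteDimensional ℝ E] [MeasurableSpace E]
    [BorelSpace E] [Nontrivial (ι → E)] {a : ι → ℝ} (ha : ∀ j, 0 < a j) :
    0 < μH[(Module.finrank ℝ (ι → E) : ℝ) - 1] (anisoGauge (E := E) a ⁻¹' {1}) := by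
  have hcont := continuous_anisoGauge (E := E) fun j ↦ (ha j).le
  have hfrontier := frontier_lt_subset_eq hcont (continuous_const (y := (1 : ℝ)))
  refine (hausdorffMeasure_frontier_pos (isOpen_lt hcont continuous_const) ⟨0, ?_⟩ ?_).trans_le
    (measure_mono hfrontier)
  · simp [anisoGauge, Real.zero_rpow (ha _).ne']
  · exact isBounded_closedBall.subset fun w hw ↦
      mem_closedBall_zero_iff.2 (norm_le_one_of_anisoGauge_le_one ha (le_of_lt hw))

end FrontierMeasure

section Sphere

variable {E : Type*} [NormedAddCommGroup E] [NormedSpace ℝ E] [FiniteDimensional ℝ E]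
  [MeasurableSpace E] [BorelSpace E] (μ : Measure E) [μ.IsAddHaarMeasure]

open scoped Pointwise in
lemma addHaar_Ioo_smul_le_of_dist_le {s : Set E} {x : E} (hx : ‖x‖ = 1) {δ : ℝ} (hδ : 0 < δ)
    (hδ1 : δ ≤ 1) (hs : ∀ y ∈ s, dist y x ≤ δ) :
    μ (Ioo (0 : ℝ) 1 • s) ≤
      ENNReal.ofReal (2 / δ * (2 * δ) ^ Module.finrank ℝ E) * μ (ball 0 1) := by
  have hsub : Ioo (0 : ℝ) 1 • s ⊆ ⋃ t ∈ Icc (0 : ℝ) 1, closedBall (t • x) δ := by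
    rintro _ ⟨t, ht, y, hy, rfl⟩
    refine mem_iUnion₂.2 ⟨t, Ioo_subset_Icc_self ht, ?_⟩
    calc dist (t • y) (t • x) = t * dist y x := by
          rw [dist_smul₀, Real.norm_of_nonneg ht.1.le]
      _ ≤ 1 * δ := by gcongr; exacts [ht.2.le, hs y hy]
      _ = δ := one_mul δ
  have hunit_speed (s : ℝ) (t : ℝ) : dist (s • x) (t • x) ≤ 1 * |s - t| := by
    rw [dist_eq_norm, ← sub_smul, norm_smul, hx, mul_one, one_mul, Real.norm_eq_abs]
  refine (measure_mono hsub).trans <| (measure_iUnion_closedBall_le_of_lipschitz μ zero_le_one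
    zero_le_one hδ hδ1 fun s _ t _ ↦ hunit_speed s t).trans_eq ?_
  norm_num

open scoped Pointwise in
lemma map_toSphere_le_of_ediam_le {s : Set E} {δ : ℝ} (hδ : 0 < δ) (hδ1 : δ ≤ 1)
    (hs : ediam s ≤ ENNReal.ofReal δ) :
    μ.toSphere.map Subtype.val s ≤ Module.finrank ℝ E *
      (ENNReal.ofReal (2 / δ * (2 * δ) ^ Module.finrank ℝ E) * μ (ball 0 1)) := by
  have hclosed : MeasurableSet (closure s) := isClosed_closure.measurableSet
  refine (measure_mono subset_closure).trans ?_
  rw [Measure.map_apply measurable_subtype_coe hclosed,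
    Measure.toSphere_apply' _ (measurable_subtype_coe hclosed)]
  rcases (Subtype.val ⁻¹' closure s : Set (sphere (0 : E) 1)).eq_empty_or_nonempty with
    hempty | ⟨x, hx⟩
  · simp [hempty]
  gcongr
  refine addHaar_Ioo_smul_le_of_dist_le μ (norm_eq_of_mem_sphere x) hδ hδ1 ?_
  rintro _ ⟨y, hy, rfl⟩
  rw [← ENNReal.ofReal_le_ofReal_iff hδ.le, ← edist_dist]
  exact (edist_le_ediam_of_mem (mem_preimage.1 hy) (mem_preimage.1 hx)).trans
    ((ediam_closure s).trans_le hs)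

variable [Nontrivial E]

lemma exists_map_toSphere_le_smul_hausdorffMeasure :
    ∃ C : ℝ≥0, μ.toSphere.map Subtype.val ≤ (C : ℝ≥0∞) • μH[(Module.finrank ℝ E : ℝ) - 1] := by
  set d := Module.finrank ℝ E
  have hd : d ≠ 0 := Module.finrank_pos.ne'
  obtain ⟨ω, hω⟩ : ∃ ω : ℝ≥0, (ω : ℝ≥0∞) = μ (ball 0 1) :=
    ⟨_, ENNReal.coe_toNNReal measure_ball_lt_top.ne⟩
  have hω0 : ω ≠ 0 := by
    rintro rfl
    exact (measure_ball_pos μ 0 one_pos).ne hω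
  refine ⟨d * (2 * 2 ^ d) * ω, le_smul_hausdorffMeasure_of_measure_le (by positivity)
    fun s δ hδ hs ↦ (map_toSphere_le_of_ediam_le μ hδ.1 hδ.2 hs).trans_eq ?_⟩
  have hpow : 2 / δ * (2 * δ) ^ d = 2 * 2 ^ d * δ ^ ((d : ℝ) - 1) := by
    rw [Real.rpow_sub_one hδ.1.ne', Real.rpow_natCast]
    ring
  rw [hpow, ENNReal.ofReal_mul (by positivity), ENNReal.ofReal_rpow_of_pos hδ.1, ← hω,
    ENNReal.ofReal_mul zero_le_two, ENNReal.ofReal_pow zero_le_two, ENNReal.ofReal_ofNat]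
  push_cast
  ring

lemma hausdorffMeasure_sphere_lt_top :
    μH[(Module.finrank ℝ E : ℝ) - 1] (sphere (0 : E) 1) < ∞ := by
  have hrank : (0 : ℝ) ≤ Module.finrank ℝ E - 1 :=
    sub_nonneg.2 (Nat.one_le_cast.2 Module.finrank_pos)
  have himage : sphere (0 : E) 1 ⊆
      (fun w : Unit → E ↦ w ()) '' (anisoGauge (fun _ : Unit ↦ (1 : ℝ)) ⁻¹' {1}) :=
    fun x hx ↦ ⟨fun _ ↦ x, by simpa [anisoGauge] using hx, rfl⟩
  have hle := (LipschitzWith.eval (α := fun _ : Unit ↦ E) ()).hausdorffMeasure_image_le hrank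
    (anisoGauge (fun _ : Unit ↦ (1 : ℝ)) ⁻¹' {1})
  have hfin := hausdorffMeasure_anisoGauge_preimage_one_lt_top (E := E)
    (a := fun _ : Unit ↦ (1 : ℝ)) fun _ ↦ le_rfl
  rw [Module.finrank_pi_fintype, Finset.univ_unique, Finset.sum_singleton] at hfin
  rw [ENNReal.coe_one, ENNReal.one_rpow, one_mul] at hle
  exact (measure_mono himage).trans_lt (hle.trans_lt hfin)

lemma hausdorffMeasure_sphere_pos :
    0 < μH[(Module.finrank ℝ E : ℝ) - 1] (sphere (0 : E) 1) := by
  rw [← frontier_ball 0 one_ne_zero]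
  exact hausdorffMeasure_frontier_pos isOpen_ball (nonempty_ball.2 one_pos) isBounded_ball

end Sphere

section RadialBound

lemma lintegral_Ioi_rpow_deriv_mul_comp_le {a : ℝ} (ha : 1 ≤ a) (b : ℝ) (P : ℝ → ℝ≥0∞) :
    ∫⁻ u in Ioi (0 : ℝ), ENNReal.ofReal |a * u ^ (a - 1)| * P (u ^ a + b) ≤ ∫⁻ s, P s := by
  have hderiv (u : ℝ) : HasDerivAt (fun u : ℝ ↦ u ^ a + b) (a * u ^ (a - 1)) u :=
    (Real.hasDerivAt_rpow_const (Or.inr ha)).add_const b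
  have hinj : InjOn (fun u : ℝ ↦ u ^ a + b) (Ioi 0) := fun u hu v hv huv ↦
    (Real.rpow_left_inj (mem_Ioi.1 hu).le (mem_Ioi.1 hv).le (by linarith)).1
      (add_right_cancel huv)
  rw [← lintegral_image_eq_lintegral_abs_deriv_mul measurableSet_Ioi
    (fun u _ ↦ (hderiv u).hasDerivWithinAt) hinj]
  exact setLIntegral_le_lintegral _ _

lemma pow_pred_le_mul_rpow_pred {d : ℕ} {a u : ℝ} (ha : 1 ≤ a) (had : a ≤ d) (hu : 0 < u)
    (hu1 : u ≤ 1) : u ^ (d - 1) ≤ a * u ^ (a - 1) := by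
  have hd : 1 ≤ d := Nat.one_le_cast.1 (ha.trans had)
  calc u ^ (d - 1) = u ^ ((d : ℝ) - 1) := by
        rw [← Real.rpow_natCast, Nat.cast_sub hd, Nat.cast_one]
    _ ≤ u ^ (a - 1) := Real.rpow_le_rpow_of_exponent_ge hu hu1 (by linarith)
    _ ≤ a * u ^ (a - 1) := le_mul_of_one_le_left (by positivity) ha

variable {E : Type*} [NormedAddCommGroup E] [NormedSpace ℝ E] [FiniteDimensional ℝ E]
  [Nontrivial E] [MeasurableSpace E] [BorelSpace E] (μ : Measure E) [μ.IsAddHaarMeasure]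

lemma lintegral_eq_lintegral_Ioi_lintegral_toSphere {G : E → ℝ≥0∞} (hG : Measurable G) :
    ∫⁻ v, G v ∂μ = ∫⁻ u in Ioi (0 : ℝ), ENNReal.ofReal (u ^ (Module.finrank ℝ E - 1)) *
      ∫⁻ θ : sphere (0 : E) 1, G (u • (θ : E)) ∂μ.toSphere := by
  set d := Module.finrank ℝ E
  have hinner : Measurable fun u : ℝ ↦ ∫⁻ θ : sphere (0 : E) 1, G (u • (θ : E)) ∂μ.toSphere :=
    Measurable.lintegral_prod_right' (f := fun z : ℝ × sphere (0 : E) 1 ↦ G (z.1 • (z.2 : E)))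
      (by fun_prop)
  calc ∫⁻ v, G v ∂μ = ∫⁻ v : ({0}ᶜ : Set E), G v ∂μ.comap Subtype.val := by
        rw [lintegral_subtype_comap (measurableSet_singleton _).compl, restrict_compl_singleton]
    _ = ∫⁻ z, G ((z.2 : ℝ) • (z.1 : E)) ∂μ.toSphere.prod (Measure.volumeIoiPow (d - 1)) := by
        rw [← μ.measurePreserving_homeomorphUnitSphereProd.lintegral_comp (by fun_prop)]
        refine lintegral_congr fun v ↦ ?_
        rw [← homeomorphUnitSphereProd_symm_apply_coe, Homeomorph.symm_apply_apply]
    _ = ∫⁻ u : Ioi (0 : ℝ), ∫⁻ θ : sphere (0 : E) 1, G ((u : ℝ) • (θ : E)) ∂μ.toSphere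
          ∂Measure.volumeIoiPow (d - 1) := lintegral_prod_symm' _ (by fun_prop)
    _ = ∫⁻ u : Ioi (0 : ℝ), ENNReal.ofReal ((u : ℝ) ^ (d - 1)) *
          ∫⁻ θ : sphere (0 : E) 1, G ((u : ℝ) • (θ : E)) ∂μ.toSphere
          ∂volume.comap Subtype.val :=
        lintegral_withDensity_eq_lintegral_mul _ (by fun_prop)
          (hinner.comp measurable_subtype_coe)
    _ = _ := lintegral_subtype_comap measurableSet_Ioi fun u : ℝ ↦ ENNReal.ofReal (u ^ (d - 1)) *
          ∫⁻ θ : sphere (0 : E) 1, G (u • (θ : E)) ∂μ.toSphere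

lemma lintegral_ball_eq_lintegral_Ioo_lintegral_toSphere {G : E → ℝ≥0∞} (hG : Measurable G)
    (R : ℝ) : ∫⁻ v in ball 0 R, G v ∂μ =
      ∫⁻ u in Ioo 0 R, ENNReal.ofReal (u ^ (Module.finrank ℝ E - 1)) *
        ∫⁻ θ : sphere (0 : E) 1, G (u • (θ : E)) ∂μ.toSphere := by
  have hmem {u : ℝ} (hu : 0 < u) (θ : sphere (0 : E) 1) : u • (θ : E) ∈ ball 0 R ↔ u ∈ Iio R := by
    simp [norm_smul, abs_of_pos hu]
  rw [← lintegral_indicator measurableSet_ball,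
    lintegral_eq_lintegral_Ioi_lintegral_toSphere μ (hG.indicator measurableSet_ball),
    ← Ioi_inter_Iio, inter_comm, ← setLIntegral_indicator measurableSet_Iio]
  refine setLIntegral_congr_fun measurableSet_Ioi fun u hu ↦ ?_
  by_cases huR : u ∈ Iio R <;> simp [indicator, hmem hu, huR]

lemma lintegral_ball_comp_norm_rpow_mul_le {a b : ℝ} (ha : 1 ≤ a) (had : a ≤ Module.finrank ℝ E)
    (hb : 0 ≤ b) {P : ℝ → ℝ≥0∞} (hP : Measurable P) {F : E → ℝ≥0∞} (hF : Measurable F)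
    {ρ : ℝ → ℝ} (hρ : Measurable ρ) (hρ0 : ∀ s, 0 < s → 0 < ρ s) {K : ℝ≥0∞}
    (hK : ∀ r : ℝ, 0 < r → ∫⁻ θ : sphere (0 : E) 1, F (r • (θ : E)) ∂μ.toSphere ≤ K) :
    ∫⁻ v in ball 0 1, P (‖v‖ ^ a + b) * F (ρ (‖v‖ ^ a + b) • v) ∂μ ≤ K * ∫⁻ s, P s := by
  have hinner {u : ℝ} (hu : 0 < u) :
      ∫⁻ θ : sphere (0 : E) 1, P (‖u • (θ : E)‖ ^ a + b) *
        F (ρ (‖u • (θ : E)‖ ^ a + b) • u • (θ : E)) ∂μ.toSphere ≤ P (u ^ a + b) * K := by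
    have hs : 0 < u ^ a + b := by positivity
    simp only [norm_smul, norm_eq_of_mem_sphere, mul_one, Real.norm_of_nonneg hu.le, smul_smul]
    rw [lintegral_const_mul _ (by fun_prop)]
    gcongr
    exact hK _ (mul_pos (hρ0 _ hs) hu)
  rw [lintegral_ball_eq_lintegral_Ioo_lintegral_toSphere μ (by fun_prop)]
  calc _ ≤ ∫⁻ u in Ioo (0 : ℝ) 1, K * (ENNReal.ofReal |a * u ^ (a - 1)| * P (u ^ a + b)) := by
        refine setLIntegral_mono' measurableSet_Ioo fun u hu ↦ ?_
        rw [mul_left_comm, mul_comm K]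
        gcongr
        · exact (pow_pred_le_mul_rpow_pred ha had hu.1 hu.2.le).trans (le_abs_self _)
        · exact hinner hu.1
    _ ≤ ∫⁻ u in Ioi (0 : ℝ), K * (ENNReal.ofReal |a * u ^ (a - 1)| * P (u ^ a + b)) :=
        lintegral_mono_set Ioo_subset_Ioi_self
    _ = K * ∫⁻ u in Ioi (0 : ℝ), ENNReal.ofReal |a * u ^ (a - 1)| * P (u ^ a + b) :=
        lintegral_const_mul _ (by fun_prop)
    _ ≤ K * ∫⁻ s, P s := mul_le_mul_right (lintegral_Ioi_rpow_deriv_mul_comp_le ha b P) K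

end RadialBound

section MarginalIntegrals

variable {ι : Type*} {X : ι → Type*} [∀ j, MeasurableSpace (X j)] {Y : Type*} [MeasurableSpace Y]

lemma measurable_mul_finset_prod {ψ : Y → ℝ≥0∞} (hψ : Measurable ψ) {q : ∀ j, Y → X j → ℝ≥0∞}
    (hq : ∀ j, Measurable (Function.uncurry (q j))) (s : Finset ι) :
    Measurable fun p : (∀ j, X j) × Y ↦ ψ p.2 * ∏ j ∈ s, q j p.2 (p.1 j) :=
  (hψ.comp measurable_snd).mul <| Finset.measurable_fun_prod _ fun j _ ↦
    (hq j).comp (f := fun p : (∀ j, X j) × Y ↦ (p.2, p.1 j)) (by fun_prop)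

variable [DecidableEq ι] {μ : ∀ j, Measure (X j)}

lemma lmarginal_const_mul (c : ℝ≥0∞) {f : (∀ j, X j) → ℝ≥0∞} (hf : Measurable f) (s : Finset ι)
    (x : ∀ j, X j) : (∫⋯∫⁻_s, fun w ↦ c * f w ∂μ) x = c * (∫⋯∫⁻_s, f ∂μ) x :=
  lintegral_const_mul _ (hf.comp measurable_updateFinset)

variable [∀ j, SigmaFinite (μ j)]

lemma lmarginal_finset_prod {g : ∀ j, X j → ℝ≥0∞} (hg : ∀ j, Measurable (g j)) (s : Finset ι)
    (x : ∀ j, X j) :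
    (∫⋯∫⁻_s, fun w ↦ ∏ j ∈ s, g j (w j) ∂μ) x = ∏ j ∈ s, ∫⁻ v, g j v ∂μ j := by
  induction s using Finset.induction_on generalizing x with
  | empty => simp
  | insert i s hi ih =>
    have hprod : Measurable fun w : ∀ j, X j ↦ ∏ j ∈ insert i s, g j (w j) := by fun_prop
    have hupdate (w : ∀ j, X j) (v : X i) :
        ∏ j ∈ insert i s, g j (Function.update w i v j) = g i v * ∏ j ∈ s, g j (w j) := by
      rw [Finset.prod_insert hi, Function.update_self]
      congr 1
      exact Finset.prod_congr rfl fun j hj ↦ by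
        rw [Function.update_of_ne (ne_of_mem_of_not_mem hj hi)]
    have hinner (w : ∀ j, X j) : ∫⁻ v, ∏ j ∈ insert i s, g j (Function.update w i v j) ∂μ i =
        (∫⁻ v, g i v ∂μ i) * ∏ j ∈ s, g j (w j) := by
      simp only [hupdate]
      exact lintegral_mul_const _ (hg i)
    rw [lmarginal_insert' _ hprod hi, Finset.prod_insert hi, ← ih x]
    simp only [hinner]
    exact lmarginal_const_mul _ (by fun_prop) s x

variable {ν : Measure Y} [SFinite ν]

lemma lmarginal_lintegral {G : (∀ j, X j) → Y → ℝ≥0∞} (hG : Measurable (Function.uncurry G))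
    (s : Finset ι) (x : ∀ j, X j) :
    (∫⋯∫⁻_s, fun w ↦ ∫⁻ y, G w y ∂ν ∂μ) x = ∫⁻ y, (∫⋯∫⁻_s, fun w ↦ G w y ∂μ) x ∂ν :=
  lintegral_lintegral_swap <| Measurable.aemeasurable <|
    hG.comp <| (measurable_updateFinset.comp measurable_fst).prodMk measurable_snd

lemma lmarginal_lintegral_mul_finset_prod {ψ : Y → ℝ≥0∞} (hψ : Measurable ψ)
    {q : ∀ j, Y → X j → ℝ≥0∞} (hq : ∀ j, Measurable (Function.uncurry (q j))) (s : Finset ι)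
    (x : ∀ j, X j) :
    (∫⋯∫⁻_s, fun w ↦ ∫⁻ y, ψ y * ∏ j ∈ s, q j y (w j) ∂ν ∂μ) x =
      ∫⁻ y, ψ y * ∏ j ∈ s, ∫⁻ v, q j y v ∂μ j ∂ν := by
  have hslice (y : Y) (j : ι) : Measurable (q j y) := (hq j).comp measurable_prodMk_left
  rw [lmarginal_lintegral (measurable_mul_finset_prod hψ hq s)]
  refine lintegral_congr fun y ↦ ?_
  have hprod : Measurable fun w : ∀ j, X j ↦ ∏ j ∈ s, q j y (w j) := by fun_prop
  rw [lmarginal_const_mul _ hprod, lmarginal_finset_prod (hslice y)]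

end MarginalIntegrals

section ConeIntegral

variable {E : Type*} [NormedAddCommGroup E] [NormedSpace ℝ E]

/-- The function `v ↦ f (s ^ (-1 / p) • v)` restricted to the unit ball. For `w` in the anisotropic
shell with gauge `s`, `coneFactor (a j) f s (w j)` is the value of `f` at the `j`-th component
of `anisoProj a w`. -/
def coneFactor (p : ℝ) (f : E → ℝ≥0∞) (s : ℝ) : E → ℝ≥0∞ :=
  (ball 0 1).indicator fun v ↦ f (s⁻¹ ^ (1 / p) • v)

variable [MeasurableSpace E] [BorelSpace E]

lemma measurable_uncurry_coneFactor [FiniteDimensional ℝ E] (p : ℝ) {f : E → ℝ≥0∞}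
    (hf : Measurable f) : Measurable (Function.uncurry (coneFactor p f)) :=
  Measurable.indicator (f := fun z : ℝ × E ↦ f (z.1⁻¹ ^ (1 / p) • z.2)) (by fun_prop)
    (measurable_snd measurableSet_ball)

lemma lintegral_coneFactor_le {μ : Measure E} {f : E → ℝ≥0∞} {N : ℝ≥0∞}
    (hN : ∀ r : ℝ, 0 < r → ∫⁻ v in ball 0 1, f (r • v) ∂μ ≤ N) (p : ℝ) {s : ℝ} (hs : 0 < s) :
    ∫⁻ v, coneFactor p f s v ∂μ ≤ N := by
  rw [coneFactor, lintegral_indicator measurableSet_ball]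
  exact hN _ (by positivity)

variable {ι : Type*} [Fintype ι] {a : ι → ℝ} {F : ι → E → ℝ≥0∞}

lemma lintegral_coneMeasure_prod [FiniteDimensional ℝ E] (ha : ∀ j, 0 < a j)
    (hF : ∀ j, Measurable (F j)) (ν : Measure (ι → E)) :
    ∫⁻ y, ∏ j, F j (y j) ∂coneMeasure a ν =
      ∫⁻ w, (Ioo (1 / 2) 1).indicator 1 (anisoGauge a w) *
        ∏ j, coneFactor (a j) (F j) (anisoGauge a w) (w j) ∂ν := by
  rw [coneMeasure, lintegral_map (by fun_prop) measurable_anisoProj,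
    ← lintegral_indicator measurableSet_anisoShell]
  refine lintegral_congr fun w ↦ ?_
  by_cases hw : anisoGauge a w ∈ Ioo (1 / 2) 1
  · have hball (j : ι) : w j ∈ ball 0 1 :=
      mem_ball_zero_iff.2 (norm_lt_one_of_anisoGauge_lt_one ha hw.2 j)
    rw [indicator_of_mem (show w ∈ anisoShell E a from hw), indicator_of_mem hw, Pi.one_apply,
      one_mul]
    refine Finset.prod_congr rfl fun j _ ↦ ?_
    rw [coneFactor, indicator_of_mem (hball j), anisoProj, anisoDilation]
  · rw [indicator_of_notMem (show w ∉ anisoShell E a from hw), indicator_of_notMem hw, zero_mul]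

variable [DecidableEq ι]

lemma lintegral_Ioo_indicator_mul_prod_lintegral_coneFactor_le {μ : Measure E} {i : ι}
    {N : ι → ℝ≥0∞} (hN : ∀ j ≠ i, ∀ r : ℝ, 0 < r → ∫⁻ v in ball 0 1, F j (r • v) ∂μ ≤ N j) :
    ∫⁻ s, (Ioo (1 / 2) 1).indicator 1 s *
        ∏ j ∈ Finset.univ.erase i, ∫⁻ v, coneFactor (a j) (F j) s v ∂μ ≤
      ∏ j ∈ Finset.univ.erase i, N j := by
  calc _ ≤ ∫⁻ s, (Ioo (1 / 2 : ℝ) 1).indicator 1 s * ∏ j ∈ Finset.univ.erase i, N j := by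
        refine lintegral_mono fun s ↦ ?_
        by_cases hs : s ∈ Ioo (1 / 2 : ℝ) 1
        · gcongr with j hj
          exact lintegral_coneFactor_le (hN j (Finset.ne_of_mem_erase hj)) _
            (one_half_pos.trans hs.1)
        · simp only [indicator_of_notMem hs, zero_mul, le_refl]
    _ = ENNReal.ofReal (1 - 1 / 2) * ∏ j ∈ Finset.univ.erase i, N j := by
        rw [lintegral_mul_const _ (measurable_one.indicator measurableSet_Ioo),
          lintegral_indicator_one measurableSet_Ioo, Real.volume_Ioo]
    _ ≤ ∏ j ∈ Finset.univ.erase i, N j :=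
        mul_le_of_le_one_left' (ENNReal.ofReal_le_one.2 (by norm_num))

variable [FiniteDimensional ℝ E] [Nontrivial E] (μ : Measure E) [μ.IsAddHaarMeasure]

lemma lintegral_update_coneFactor_le (hF : ∀ j, Measurable (F j)) {i : ι} (ha : 1 ≤ a i)
    (had : a i ≤ Module.finrank ℝ E) {K : ℝ≥0∞}
    (hK : ∀ r : ℝ, 0 < r → ∫⁻ θ : sphere (0 : E) 1, F i (r • (θ : E)) ∂μ.toSphere ≤ K)
    {ψ : ℝ → ℝ≥0∞} (hψ : Measurable ψ) (w : ι → E) :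
    ∫⁻ v, ψ (anisoGauge a (Function.update w i v)) * ∏ j, coneFactor (a j) (F j)
        (anisoGauge a (Function.update w i v)) (Function.update w i v j) ∂μ ≤
      K * ∫⁻ s, ψ s * ∏ j ∈ Finset.univ.erase i, coneFactor (a j) (F j) s (w j) := by
  set P : ℝ → ℝ≥0∞ := fun s ↦ ψ s * ∏ j ∈ Finset.univ.erase i, coneFactor (a j) (F j) s (w j)
  have hP : Measurable P := hψ.mul <| Finset.measurable_fun_prod _ fun j _ ↦
    (measurable_uncurry_coneFactor (a j) (hF j)).comp measurable_prodMk_right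
  have hsplit (v : E) (s : ℝ) :
      ψ s * ∏ j, coneFactor (a j) (F j) s (Function.update w i v j) =
        (ball 0 1).indicator (fun v ↦ P s * F i (s⁻¹ ^ (1 / a i) • v)) v := by
    rw [← Finset.prod_erase_mul _ _ (Finset.mem_univ i), Function.update_self, ← mul_assoc,
      Finset.prod_congr rfl fun j hj ↦ by rw [Function.update_of_ne (Finset.ne_of_mem_erase hj)]]
    exact (indicator_mul_right (ball 0 1) (fun _ ↦ P s) _).symm
  simp only [hsplit, anisoGauge_update]
  exact (lintegral_indicator measurableSet_ball _).trans_le <|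
    lintegral_ball_comp_norm_rpow_mul_le μ ha had (by positivity) hP (hF i)
      (ρ := fun s ↦ s⁻¹ ^ (1 / a i)) (by fun_prop) (fun s hs ↦ by positivity) hK

lemma lintegral_coneMeasure_prod_le (ha : ∀ j, 1 ≤ a j) (hF : ∀ j, Measurable (F j)) {i : ι}
    (had : a i ≤ Module.finrank ℝ E) {K : ℝ≥0∞}
    (hK : ∀ r : ℝ, 0 < r → ∫⁻ θ : sphere (0 : E) 1, F i (r • (θ : E)) ∂μ.toSphere ≤ K)
    {N : ι → ℝ≥0∞} (hN : ∀ j ≠ i, ∀ r : ℝ, 0 < r → ∫⁻ v in ball 0 1, F j (r • v) ∂μ ≤ N j) :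
    ∫⁻ y, ∏ j, F j (y j) ∂coneMeasure a (Measure.pi fun _ ↦ μ) ≤
      K * ∏ j ∈ Finset.univ.erase i, N j := by
  set ψ : ℝ → ℝ≥0∞ := (Ioo (1 / 2) 1).indicator 1
  have hψ : Measurable ψ := measurable_one.indicator measurableSet_Ioo
  have hq := fun j ↦ measurable_uncurry_coneFactor (a j) (hF j)
  calc ∫⁻ y, ∏ j, F j (y j) ∂coneMeasure a (Measure.pi fun _ ↦ μ)
      = ∫⁻ w, ψ (anisoGauge a w) * ∏ j, coneFactor (a j) (F j) (anisoGauge a w) (w j)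
          ∂Measure.pi fun _ ↦ μ :=
        lintegral_coneMeasure_prod (fun j ↦ zero_lt_one.trans_le (ha j)) hF _
    _ = (∫⋯∫⁻_Finset.univ.erase i, fun w ↦ ∫⁻ v, ψ (anisoGauge a (Function.update w i v)) *
          ∏ j, coneFactor (a j) (F j) (anisoGauge a (Function.update w i v))
            (Function.update w i v j) ∂μ ∂fun _ ↦ μ) 0 := by
        rw [lintegral_eq_lmarginal_univ 0, lmarginal_erase' _ _ (Finset.mem_univ i)]
        exact (measurable_mul_finset_prod hψ hq _).comp
          (measurable_id.prodMk measurable_anisoGauge)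
    _ ≤ (∫⋯∫⁻_Finset.univ.erase i, fun w ↦ K * ∫⁻ s, ψ s *
          ∏ j ∈ Finset.univ.erase i, coneFactor (a j) (F j) s (w j) ∂volume ∂fun _ ↦ μ) 0 :=
        lmarginal_mono (fun w ↦ lintegral_update_coneFactor_le μ hF (ha i) had hK hψ w) 0
    _ = K * ∫⁻ s, ψ s * ∏ j ∈ Finset.univ.erase i, ∫⁻ v, coneFactor (a j) (F j) s v ∂μ := by
        rw [lmarginal_const_mul _ (measurable_mul_finset_prod hψ hq _).lintegral_prod_right',
          lmarginal_lintegral_mul_finset_prod hψ hq]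
    _ ≤ K * ∏ j ∈ Finset.univ.erase i, N j :=
        mul_le_mul_right (lintegral_Ioo_indicator_mul_prod_lintegral_coneFactor_le hN) K

end ConeIntegral

section MaximalFunctions

lemma lintegral_ball_comp_sub_smul {E : Type*} [NormedAddCommGroup E] [NormedSpace ℝ E]
    [FiniteDimensional ℝ E] [MeasurableSpace E] [BorelSpace E] (μ : Measure E)
    [μ.IsAddHaarMeasure] {g : E → ℝ≥0∞} (hg : Measurable g) (x : E) {t : ℝ} (ht : 0 < t) :
    ∫⁻ w in ball 0 1, g (x - t • w) ∂μ =
      μ (ball 0 1) * ((∫⁻ y in ball x t, g y ∂μ) / μ (ball x t)) := by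
  set d := Module.finrank ℝ E
  have hmem (w : E) : w ∈ (fun w ↦ x - t • w) ⁻¹' ball x t ↔ w ∈ ball 0 1 := by
    rw [mem_preimage, mem_ball, dist_self_sub_left, norm_smul, Real.norm_of_nonneg ht.le,
      mem_ball_zero_iff, mul_lt_iff_lt_one_right ht]
  have hscale : ∫⁻ w in ball 0 1, g (x - t • w) ∂μ =
      ENNReal.ofReal (t ^ d)⁻¹ * ∫⁻ y in ball x t, g y ∂μ := by
    calc ∫⁻ w in ball 0 1, g (x - t • w) ∂μ
        = ∫⁻ w, (ball x t).indicator g (x - t • w) ∂μ := by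
          rw [← lintegral_indicator measurableSet_ball, ← Set.ext hmem]
          rfl
      _ = ∫⁻ v, (ball x t).indicator g (x - v) ∂μ.map (t • ·) :=
          (lintegral_map ((hg.indicator measurableSet_ball).comp (by fun_prop))
            (by fun_prop)).symm
      _ = ENNReal.ofReal (t ^ d)⁻¹ * ∫⁻ y in ball x t, g y ∂μ := by
          rw [Measure.map_addHaar_smul _ ht.ne', lintegral_smul_measure, smul_eq_mul,
            abs_of_pos (by positivity), lintegral_sub_left_eq_self,
            lintegral_indicator measurableSet_ball]
  have hball0 : μ (ball 0 1) ≠ 0 := (measure_ball_pos μ 0 one_pos).ne'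
  rw [hscale, μ.addHaar_ball_of_pos x ht, ENNReal.div_eq_inv_mul,
    ENNReal.mul_inv (Or.inr measure_ball_lt_top.ne) (Or.inr hball0),
    ENNReal.ofReal_inv_of_pos (by positivity), ← mul_assoc, mul_left_comm,
    ENNReal.mul_inv_cancel hball0 measure_ball_lt_top.ne, mul_one]

variable {n : ℕ}

lemma lintegral_ball_ofReal_le_HLMax {f : Rn n → ℝ} (hf : Measurable f) (hf0 : ∀ y, 0 ≤ f y)
    (x : Rn n) {t : ℝ} (ht : 0 < t) :
    ∫⁻ w in ball 0 1, ENNReal.ofReal (f (x - t • w)) ≤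
      volume (ball (0 : Rn n) 1) * HLMax n f x := by
  rw [lintegral_ball_comp_sub_smul volume (g := fun y ↦ ENNReal.ofReal (f y)) (by fun_prop) x ht]
  gcongr
  exact le_iSup₂_of_le (f := fun r (_ : r ∈ Ioi (0 : ℝ)) ↦
    (∫⁻ y in ball x r, ENNReal.ofReal |f y|) / volume (ball x r)) t ht
    (by simp only [abs_of_nonneg (hf0 _), le_refl])

lemma exists_map_toSphere_le_smul_μSph [Nontrivial (Rn n)] :
    ∃ C : ℝ≥0, (volume : Measure (Rn n)).toSphere.map Subtype.val ≤ (C : ℝ≥0∞) • μSph n := by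
  obtain ⟨C, hC⟩ := exists_map_toSphere_le_smul_hausdorffMeasure (volume : Measure (Rn n))
  have hpos := hausdorffMeasure_sphere_pos (E := Rn n)
  have hfin := hausdorffMeasure_sphere_lt_top (E := Rn n)
  rw [finrank_euclideanSpace_fin] at hC hpos hfin
  obtain ⟨A, hA⟩ : ∃ A : ℝ≥0, (A : ℝ≥0∞) = μH[(n : ℝ) - 1] (sphere (0 : Rn n) 1) :=
    ⟨_, ENNReal.coe_toNNReal hfin.ne⟩
  have hsupport : ∀ᵐ θ ∂(volume : Measure (Rn n)).toSphere.map Subtype.val,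
      θ ∈ sphere (0 : Rn n) 1 :=
    (ae_map_iff measurable_subtype_coe.aemeasurable isClosed_sphere.measurableSet).2
      (.of_forall Subtype.property)
  refine ⟨C * A, ?_⟩
  calc (volume : Measure (Rn n)).toSphere.map Subtype.val
      = ((volume : Measure (Rn n)).toSphere.map Subtype.val).restrict (sphere 0 1) :=
        (Measure.restrict_eq_self_of_ae_mem hsupport).symm
    _ ≤ ((C : ℝ≥0∞) • μH[(n : ℝ) - 1]).restrict (sphere 0 1) := Measure.restrict_mono le_rfl hC
    _ = ((C * A : ℝ≥0) : ℝ≥0∞) • μSph n := by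
        rw [μSph, smul_smul, ENNReal.coe_mul, hA, mul_assoc,
          ENNReal.mul_inv_cancel hpos.ne' hfin.ne, mul_one, Measure.restrict_smul]

lemma exists_lintegral_toSphere_le_sphMax [Nontrivial (Rn n)] :
    ∃ C : ℝ≥0, ∀ f : Rn n → ℝ, Measurable f → ∀ (x : Rn n) (t : ℝ), 0 < t →
      ∫⁻ θ : sphere (0 : Rn n) 1, ENNReal.ofReal (f (x - t • (θ : Rn n)))
        ∂(volume : Measure (Rn n)).toSphere ≤ C * sphMax n f x := by
  obtain ⟨C, hC⟩ := exists_map_toSphere_le_smul_μSph (n := n)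
  refine ⟨C, fun f hf x t ht ↦ ?_⟩
  calc _ = ∫⁻ θ, ENNReal.ofReal (f (x - t • θ))
        ∂(volume : Measure (Rn n)).toSphere.map Subtype.val :=
        (lintegral_map (by fun_prop) measurable_subtype_coe).symm
    _ ≤ C * sphAvgE n f x t := by
        rw [sphAvgE, ← smul_eq_mul, ← lintegral_smul_measure]
        exact lintegral_mono' hC le_rfl
    _ ≤ C * sphMax n f x := by
        gcongr
        exact le_iSup₂ (f := fun t (_ : t ∈ Ioi (0 : ℝ)) ↦ sphAvgE n f x t) t ht

variable {m : ℕ} {a : Fin m → ℝ}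

lemma exists_μSm_le_smul_coneMeasure [Nontrivial (Fin m → Rn n)] (ha : ∀ j, 1 ≤ a j) :
    ∃ C : ℝ≥0, μSm n m a ≤ (C : ℝ≥0∞) • coneMeasure a (Measure.pi fun _ ↦ volume) := by
  obtain ⟨C, hC⟩ := exists_hausdorffMeasure_restrict_le_smul_coneMeasure (E := Rn n)
    (Measure.pi fun _ ↦ volume) ha
  have hpos := hausdorffMeasure_anisoGauge_preimage_one_pos (E := Rn n)
    fun j ↦ zero_lt_one.trans_le (ha j)
  have hrank : (Module.finrank ℝ (Fin m → Rn n) : ℝ) = m * n := by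
    rw [Module.finrank_pi_fintype]
    simp
  rw [hrank] at hC hpos
  have hinv : (μH[(m : ℝ) * n - 1] (Sm n m a))⁻¹ ≠ ∞ := ENNReal.inv_ne_top.2 hpos.ne'
  refine ⟨(μH[(m : ℝ) * n - 1] (Sm n m a))⁻¹.toNNReal * C, ?_⟩
  rw [ENNReal.coe_mul, ENNReal.coe_toNNReal hinv, ← smul_smul]
  exact fun s ↦ mul_le_mul_right (hC s) _

end MaximalFunctions

theorem multilinear_maximal_pointwise_domination_general
    (n m : ℕ) (a : Fin m → ℝ) (ha : ∀ j, 1 ≤ a j) :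
    ∃ C : ℝ≥0, ∀ i : Fin m, a i ≤ n → ∀ f : Fin m → Rn n → ℝ,
      (∀ j, Measurable (f j)) → (∀ j y, 0 ≤ f j y) →
      ∀ x : Rn n,
        mMaxE n m a f x ≤
          (C : ℝ≥0∞) * sphMax n (f i) x * ∏ j ∈ Finset.univ.erase i, HLMax n (f j) x := by
  rcases n.eq_zero_or_pos with rfl | hn
  · exact ⟨0, fun i hi ↦ absurd ((ha i).trans hi) (by simp)⟩
  rcases m.eq_zero_or_pos with rfl | hm
  · exact ⟨0, fun i ↦ i.elim0⟩
  have := Fin.pos_iff_nonempty.1 hn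
  have := Fin.pos_iff_nonempty.1 hm
  obtain ⟨Cc, hCc⟩ := exists_μSm_le_smul_coneMeasure (n := n) ha
  obtain ⟨Cs, hCs⟩ := exists_lintegral_toSphere_le_sphMax (n := n)
  obtain ⟨ω, hω⟩ : ∃ ω : ℝ≥0, (ω : ℝ≥0∞) = volume (ball (0 : Rn n) 1) :=
    ⟨_, ENNReal.coe_toNNReal measure_ball_lt_top.ne⟩
  refine ⟨Cc * Cs * ω ^ (m - 1), fun i hi f hf hf0 x ↦ iSup₂_le fun t ht ↦ ?_⟩
  calc mAvgE n m a f t x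
      ≤ Cc * ∫⁻ y, ∏ j, ENNReal.ofReal (f j (x - t j • y j))
          ∂coneMeasure a (Measure.pi fun _ ↦ volume) := by
        rw [mAvgE, ← smul_eq_mul, ← lintegral_smul_measure]
        exact lintegral_mono' hCc le_rfl
    _ ≤ Cc * (Cs * sphMax n (f i) x *
          ∏ j ∈ Finset.univ.erase i, (volume (ball (0 : Rn n) 1) * HLMax n (f j) x)) := by
        gcongr
        refine lintegral_coneMeasure_prod_le volume
          (F := fun j v ↦ ENNReal.ofReal (f j (x - t j • v))) ha (by fun_prop) (by simpa using hi)
          (fun r hr ↦ ?_) (fun j _ r hr ↦ ?_)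
        · simpa only [smul_smul] using hCs (f i) (hf i) x (t i * r) (mul_pos (ht i) hr)
        · simpa only [smul_smul] using
            lintegral_ball_ofReal_le_HLMax (hf j) (hf0 j) x (mul_pos (ht j) hr)
    _ = _ := by
        rw [Finset.prod_mul_distrib, Finset.prod_const,
          Finset.card_erase_of_mem (Finset.mem_univ i), Finset.card_fin, ← hω]
        push_cast
        ring

/-- The multilinear pointwise domination (4.6): if `a_j ≤ n` for every `j`, then for
each `i` the maximal function `𝔐_m^𝐚` is dominated by `ℳ_s f_i · ∏_{j≠i} M f_j`. -/
theorem multilinear_maximal_pointwise_domination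
    (n m : ℕ) (hn : 2 ≤ n) (hm : 2 ≤ m) (a : Fin m → ℝ)
    (ha : ∀ j, 1 ≤ a j) (han : ∀ j, a j ≤ (n : ℝ)) :
    ∃ C : ℝ≥0, ∀ (i : Fin m) (f : Fin m → Rn n → ℝ),
      (∀ j, Measurable (f j)) → (∀ j y, 0 ≤ f j y) →
      ∀ x : Rn n,
        mMaxE n m a f x ≤
          (C : ℝ≥0∞) * sphMax n (f i) x * ∏ j ∈ Finset.univ.erase i, HLMax n (f j) x :=
  (multilinear_maximal_pointwise_domination_general n m a ha).imp fun _ hC i ↦ hC i (han i)
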